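/- Let a₁ = (40 + 3√205)/105. Then lim_{x→∞} x⁸·(ψ(x+1) − L(x,a₁)) = −2/1225; that is, ψ(x+1) − L(x,a₁) tends to zero at the rate x^{−8} as x → ∞. -/

import Mathlib

open Real Filter Set

/-- The digamma function ψ(x) = Γ'(x)/Γ(x), as the derivative of log ∘ Γ. -/
noncomputable def digamma (x : ℝ) : ℝ := deriv (fun y : ℝ => Real.log (Real.Gamma y)) x

/-- L(x,a) = (1/(90a²+2))·ln(x²+x+(3a+1)/3) + (45a²/(90a²+2))·ln(x²+x+(15a−1)/(45a)). -/
noncomputable def L (x a : ℝ) : ℝ :=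
  (1 / (90 * a ^ 2 + 2)) * Real.log (x ^ 2 + x + (3 * a + 1) / 3) +
    (45 * a ^ 2 / (90 * a ^ 2 + 2)) * Real.log (x ^ 2 + x + (15 * a - 1) / (45 * a))

/-!
Centre everything at `s = x + 1/2`. Convexity of `log Γ` gives `ψ(s) - log s → 0`, so a truncated
asymptotic series for `ψ(s + 1/2) - log s` can be verified by telescoping: the forward difference of
its remainder is elementary in `w = 1/(2s + 1)`, because `log((s + 1)/s) = log((1 + w)/(1 - w))`.
On the other side `L(s - 1/2, a) = log s + A log(1 + u/s²) + B log(1 + v/s²)` is also even up to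
`log s`. For every `a ≠ 0` the two expansions agree through `s⁻⁴`, and the `s⁻⁶` terms agree
exactly when `a - 1/(45a) = 16/21`, an equation of which `a₁` is a root.
-/

open Topology Asymptotics

section ForwardDifference

variable {E : Type*} [SeminormedAddCommGroup E] {f : ℝ → E} {g : ℝ → ℝ}

theorem norm_le_of_norm_sub_add_one_le {a s : ℝ} (hf : Tendsto f atTop (𝓝 0))
    (hg : Tendsto g atTop (𝓝 0)) (hfg : ∀ t ≥ a, ‖f t - f (t + 1)‖ ≤ g t - g (t + 1))
    (hs : a ≤ s) : ‖f s‖ ≤ g s := by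
  have hshift : Tendsto (fun n : ℕ => s + n) atTop atTop :=
    tendsto_atTop_add_const_left _ _ tendsto_natCast_atTop_atTop
  have htelescope (n : ℕ) : ‖f s - f (s + n)‖ ≤ g s - g (s + n) := by
    have h := dist_le_range_sum_of_dist_le (f := fun k : ℕ => f (s + k))
      (d := fun k : ℕ => g (s + k) - g (s + (k + 1 : ℕ))) n fun {k} _ => by
        rw [dist_eq_norm, Nat.cast_add_one, ← add_assoc]
        exact hfg _ (hs.trans (le_add_of_nonneg_right k.cast_nonneg))
    rw [Finset.sum_range_sub', dist_eq_norm] at h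
    simpa only [Nat.cast_zero, add_zero] using h
  simpa only [sub_zero] using le_of_tendsto_of_tendsto'
    ((hf.comp hshift).const_sub (f s)).norm ((hg.comp hshift).const_sub (g s)) htelescope

theorem isBigO_of_isBigO_sub_add_one (hf : Tendsto f atTop (𝓝 0)) (hg : Tendsto g atTop (𝓝 0))
    (hanti : ∀ᶠ s in atTop, g (s + 1) ≤ g s)
    (hfg : (fun s => f s - f (s + 1)) =O[atTop] fun s => g s - g (s + 1)) : f =O[atTop] g := by
  obtain ⟨C, hC, hbound⟩ := hfg.exists_pos
  obtain ⟨a, ha⟩ := eventually_atTop.1 (hanti.and hbound.bound)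
  refine IsBigO.of_bound C (eventually_atTop.2 ⟨a, fun s hs => ?_⟩)
  have hle : ‖f s‖ ≤ C * g s := by
    refine norm_le_of_norm_sub_add_one_le (g := fun t => C * g t) hf
      (by simpa only [mul_zero] using hg.const_mul C) (fun t ht => ?_) hs
    obtain ⟨hgt, hft⟩ := ha t ht
    rwa [Real.norm_of_nonneg (sub_nonneg.2 hgt), mul_sub] at hft
  exact hle.trans (mul_le_mul_of_nonneg_left (le_abs_self _) hC.le)

theorem tendsto_inv_pow_atTop_zero {n : ℕ} (hn : n ≠ 0) :
    Tendsto (fun s : ℝ => s⁻¹ ^ n) atTop (𝓝 0) := by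
  simpa only [zero_pow hn] using (tendsto_inv_atTop_zero (𝕜 := ℝ)).pow n

theorem inv_add_one_pow_le_inv_pow (n : ℕ) {s : ℝ} (hs : 0 < s) :
    (s + 1)⁻¹ ^ n ≤ s⁻¹ ^ n := by
  gcongr
  linarith

theorem inv_pow_isBigO_sub_add_one (n : ℕ) :
    (fun s : ℝ => s⁻¹ ^ (n + 2)) =O[atTop] fun s => s⁻¹ ^ (n + 1) - (s + 1)⁻¹ ^ (n + 1) := by
  refine IsBigO.of_bound (2 ^ (n + 1)) ?_
  filter_upwards [eventually_ge_atTop 1] with s hs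
  have hs0 : 0 < s := by linarith
  have hhalf : s⁻¹ / 2 ≤ (s + 1)⁻¹ := by
    rw [← one_div, div_div, ← one_div]
    exact one_div_le_one_div_of_le (by linarith) (by linarith)
  have hdiff : s⁻¹ * (s + 1)⁻¹ = s⁻¹ - (s + 1)⁻¹ := by
    field_simp
    ring
  rw [Real.norm_of_nonneg (by positivity),
    Real.norm_of_nonneg (sub_nonneg.2 (inv_add_one_pow_le_inv_pow _ hs0))]
  calc s⁻¹ ^ (n + 2) = 2 ^ (n + 1) * (s⁻¹ * (s⁻¹ / 2) ^ (n + 1)) := by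
        rw [pow_succ' _ (n + 1), mul_left_comm, ← mul_pow, mul_div_cancel₀ _ two_ne_zero]
    _ ≤ 2 ^ (n + 1) * (s⁻¹ * (s + 1)⁻¹ ^ (n + 1)) := by gcongr
    _ = 2 ^ (n + 1) * (s⁻¹ * (s + 1)⁻¹ ^ n - (s + 1)⁻¹ ^ (n + 1)) := by
        rw [pow_succ' (s + 1)⁻¹, ← mul_assoc s⁻¹, hdiff, sub_mul]
    _ ≤ 2 ^ (n + 1) * (s⁻¹ ^ (n + 1) - (s + 1)⁻¹ ^ (n + 1)) := by
        rw [pow_succ' s⁻¹]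
        gcongr ?_ * (_ * ?_ - _)
        exact inv_add_one_pow_le_inv_pow n hs0

theorem isBigO_inv_pow_of_sub_add_one (n : ℕ) (hf : Tendsto f atTop (𝓝 0))
    (hdiff : (fun s => f s - f (s + 1)) =O[atTop] fun s => s⁻¹ ^ (n + 2)) :
    f =O[atTop] fun s => s⁻¹ ^ (n + 1) :=
  isBigO_of_isBigO_sub_add_one hf (tendsto_inv_pow_atTop_zero n.succ_ne_zero)
    ((eventually_gt_atTop 0).mono fun _ => inv_add_one_pow_le_inv_pow _)
    (hdiff.trans (inv_pow_isBigO_sub_add_one n))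

end ForwardDifference

section LeadingTerm

variable {f : ℝ → ℝ} {c : ℝ}

theorem tendsto_pow_mul_of_isBigO_sub {m n : ℕ} (hmn : n < m)
    (hf : (fun s => f s - c * s⁻¹ ^ n) =O[atTop] fun s => s⁻¹ ^ m) :
    Tendsto (fun s => s ^ n * f s) atTop (𝓝 c) := by
  have hmul : (fun s => s ^ n * f s - c) =O[atTop] fun s => s⁻¹ ^ (m - n) := by
    refine ((isBigO_refl (fun s : ℝ => s ^ n) atTop).mul hf).congr' ?_ ?_ <;>
      filter_upwards [eventually_ne_atTop 0] with s hs
    · rw [mul_sub, mul_left_comm, ← mul_pow, mul_inv_cancel₀ hs, one_pow, mul_one]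
    · rw [← Nat.sub_add_cancel hmn.le, pow_add, Nat.add_sub_cancel, mul_left_comm, ← mul_pow,
        mul_inv_cancel₀ hs, one_pow, mul_one]
  exact tendsto_sub_nhds_zero_iff.1
    (hmul.trans_tendsto (tendsto_inv_pow_atTop_zero (Nat.sub_ne_zero_of_lt hmn)))

theorem tendsto_pow_mul_comp_add_const {n : ℕ} (b : ℝ)
    (hf : Tendsto (fun s => s ^ n * f s) atTop (𝓝 c)) :
    Tendsto (fun x => x ^ n * f (x + b)) atTop (𝓝 c) := by
  have hshift : Tendsto (fun x : ℝ => x + b) atTop atTop :=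
    tendsto_atTop_add_const_right _ _ tendsto_id
  have hratio : Tendsto (fun x : ℝ => (1 - b / (x + b)) ^ n) atTop (𝓝 1) := by
    simpa only [sub_zero, one_pow] using
      (((tendsto_const_nhds (x := b)).div_atTop hshift).const_sub 1).pow n
  have hprod := hratio.mul (hf.comp hshift)
  rw [one_mul] at hprod
  refine hprod.congr' ?_
  filter_upwards [hshift.eventually_ne_atTop 0] with x hx
  rw [Function.comp_apply, one_sub_div hx, add_sub_cancel_right, ← mul_assoc, ← mul_pow,
    div_mul_cancel₀ x hx]

end LeadingTerm

section LogTaylor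

theorem log_one_sub_add_sum_isBigO (n : ℕ) :
    (fun x : ℝ => (∑ i ∈ Finset.range n, x ^ (i + 1) / (i + 1)) + log (1 - x))
      =O[𝓝 0] fun x => x ^ (n + 1) := by
  refine IsBigO.of_bound 2 ?_
  filter_upwards [Metric.ball_mem_nhds (0 : ℝ) one_half_pos] with x hx
  rw [mem_ball_zero_iff, Real.norm_eq_abs] at hx
  refine (abs_log_sub_add_sum_range_le (by linarith) n).trans ?_
  rw [norm_pow, Real.norm_eq_abs, div_le_iff₀ (by linarith)]
  nlinarith [pow_nonneg (abs_nonneg x) (n + 1)]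

theorem log_one_add_div_one_sub_sub_sum_isBigO (n : ℕ) :
    (fun x : ℝ => log ((1 + x) / (1 - x))
        - 2 * ∑ i ∈ Finset.range n, x ^ (2 * i + 1) / (2 * i + 1))
      =O[𝓝 0] fun x => x ^ (2 * n + 1) := by
  refine IsBigO.of_bound 4 ?_
  filter_upwards [Metric.ball_mem_nhds (0 : ℝ) one_half_pos] with x hx
  rw [mem_ball_zero_iff, Real.norm_eq_abs] at hx
  have hsq : x ^ 2 ≤ 1 / 2 := by nlinarith [sq_abs x, abs_nonneg x]
  have hbound := sum_range_sub_log_div_le (x := x) (by linarith) n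
  rw [le_div_iff₀ (by linarith)] at hbound
  rw [show ∀ l σ : ℝ, l - 2 * σ = 2 * (1 / 2 * l - σ) by intros; ring, norm_mul, norm_pow,
    Real.norm_ofNat, Real.norm_eq_abs, Real.norm_eq_abs]
  nlinarith [abs_nonneg (1 / 2 * log ((1 + x) / (1 - x))
    - ∑ i ∈ Finset.range n, x ^ (2 * i + 1) / (2 * i + 1))]

theorem log_one_add_mul_inv_sq_sub_isBigO (u : ℝ) :
    (fun s : ℝ => log (1 + u * s⁻¹ ^ 2) - (u * s⁻¹ ^ 2 - u ^ 2 * s⁻¹ ^ 4 / 2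
        + u ^ 3 * s⁻¹ ^ 6 / 3 - u ^ 4 * s⁻¹ ^ 8 / 4))
      =O[atTop] fun s => s⁻¹ ^ 10 := by
  have harg : Tendsto (fun s : ℝ => -u * s⁻¹ ^ 2) atTop (𝓝 0) := by
    simpa only [mul_zero] using (tendsto_inv_pow_atTop_zero two_ne_zero).const_mul (-u)
  have hpow : (fun s : ℝ => (-u * s⁻¹ ^ 2) ^ 5) =O[atTop] fun s => s⁻¹ ^ 10 :=
    ((isBigO_refl _ _).const_mul_left ((-u) ^ 5)).congr_left fun s => by ring
  refine (((log_one_sub_add_sum_isBigO 4).comp_tendsto harg).trans hpow).congr_left fun s => ?_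
  simp only [Function.comp_apply, Finset.sum_range_succ, Finset.sum_range_zero, neg_mul,
    sub_neg_eq_add]
  push_cast
  ring

end LogTaylor

section Digamma

theorem hasDerivAt_log_Gamma {x : ℝ} (hx : 0 < x) : HasDerivAt (log ∘ Gamma) (digamma x) x := by
  have hGamma : DifferentiableAt ℝ Gamma x :=
    differentiableAt_Gamma fun m => by linarith [m.cast_nonneg (α := ℝ)]
  exact (hGamma.log (Gamma_pos_of_pos hx).ne').hasDerivAt

theorem log_Gamma_add_one {x : ℝ} (hx : 0 < x) :
    log (Gamma (x + 1)) = log x + log (Gamma x) := by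
  rw [Gamma_add_one hx.ne', log_mul hx.ne' (Gamma_pos_of_pos hx).ne']

theorem digamma_add_one {x : ℝ} (hx : 0 < x) : digamma (x + 1) = digamma x + x⁻¹ := by
  have hleft := (hasDerivAt_log_Gamma (add_pos hx one_pos)).comp_add_const x 1
  have hright := (hasDerivAt_log hx.ne').add (hasDerivAt_log_Gamma hx)
  rw [add_comm (digamma x)]
  refine hleft.unique (hright.congr_of_eventuallyEq ?_)
  filter_upwards [eventually_gt_nhds hx] with y hy
  exact log_Gamma_add_one hy

theorem slope_log_Gamma_add_one {x : ℝ} (hx : 0 < x) :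
    slope (log ∘ Gamma) x (x + 1) = log x := by
  rw [slope_def_field, Function.comp_apply, Function.comp_apply, log_Gamma_add_one hx]
  ring

theorem digamma_le_log {x : ℝ} (hx : 0 < x) : digamma x ≤ log x :=
  (convexOn_log_Gamma.le_slope_of_hasDerivAt hx (add_pos hx one_pos) (lt_add_one x)
    (hasDerivAt_log_Gamma hx)).trans_eq (slope_log_Gamma_add_one hx)

theorem log_sub_inv_le_digamma {x : ℝ} (hx : 0 < x) : log x - x⁻¹ ≤ digamma x := by
  rw [sub_le_iff_le_add, ← digamma_add_one hx, ← slope_log_Gamma_add_one hx]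
  have hx' : 0 < x + 1 := add_pos hx one_pos
  exact convexOn_log_Gamma.slope_le_of_hasDerivAt hx hx' (lt_add_one x) (hasDerivAt_log_Gamma hx')

theorem tendsto_digamma_sub_log : Tendsto (fun s => digamma s - log s) atTop (𝓝 0) := by
  have hlower : Tendsto (fun s : ℝ => -s⁻¹) atTop (𝓝 0) := by
    simpa only [neg_zero] using (tendsto_inv_atTop_zero (𝕜 := ℝ)).neg
  refine tendsto_of_tendsto_of_tendsto_of_le_of_le' hlower tendsto_const_nhds ?_ ?_ <;>
    filter_upwards [eventually_gt_atTop 0] with s hs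
  · linarith [log_sub_inv_le_digamma hs]
  · linarith [digamma_le_log hs]

/-- The first four terms `-B₂ₖ(1/2) / (2k) * z ^ (2k)` of the asymptotic series of
`ψ(s + 1/2) - log s`, as a polynomial in `z = 1/s`. -/
noncomputable def digammaHalfSeries (z : ℝ) : ℝ :=
  z ^ 2 / 24 - 7 * z ^ 4 / 960 + 31 * z ^ 6 / 8064 - 127 * z ^ 8 / 30720

/-- The error in approximating `ψ(s + 1/2)` by `log s` plus `digammaHalfSeries (1/s)`. -/
noncomputable def digammaHalfRemainder (s : ℝ) : ℝ :=
  digamma (s + 1 / 2) - log s - digammaHalfSeries s⁻¹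

theorem tendsto_digammaHalfRemainder : Tendsto digammaHalfRemainder atTop (𝓝 0) := by
  have hdigamma := tendsto_digamma_sub_log.comp
    (tendsto_atTop_add_const_right atTop (1 / 2 : ℝ) tendsto_id)
  have hseries : Tendsto (fun s : ℝ => digammaHalfSeries s⁻¹) atTop (𝓝 0) := by
    have hcont : Continuous digammaHalfSeries := by
      unfold digammaHalfSeries
      fun_prop
    exact (hcont.tendsto' 0 0 (by norm_num [digammaHalfSeries])).comp tendsto_inv_atTop_zero
  have hsum := (hdigamma.add (tendsto_log_comp_add_sub_log (1 / 2))).sub hseries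
  rw [add_zero, sub_zero] at hsum
  refine hsum.congr fun s => ?_
  simp only [digammaHalfRemainder, Function.comp_apply, id]
  ring

-- The coefficients of `digammaHalfSeries` are exactly those that make this difference match the
-- odd Taylor coefficients of `log ((1 + w) / (1 - w))` from `w ^ 3` to `w ^ 9`.
theorem digammaHalfSeries_sub_isBigO :
    (fun w : ℝ => digammaHalfSeries (2 * w / (1 - w)) - digammaHalfSeries (2 * w / (1 + w))
        - 2 * (w ^ 3 / 3 + w ^ 5 / 5 + w ^ 7 / 7 + w ^ 9 / 9))
      =O[𝓝 0] fun w => w ^ 11 := by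
  have hquot : (fun w : ℝ => (-464 / 3 - 3384 / 35 * w ^ 2 - 5692 / 315 * w ^ 4 - 244 / 45 * w ^ 6
      + 314 / 45 * w ^ 8 - 1366 / 315 * w ^ 10 + 94 / 63 * w ^ 12 - 2 / 9 * w ^ 14)
      / ((1 - w) ^ 8 * (1 + w) ^ 8)) =O[𝓝 0] fun _ => (1 : ℝ) :=
    (ContinuousAt.div (by fun_prop) (by fun_prop) (by norm_num)).tendsto.isBigO_one ℝ
  refine ((isBigO_refl (fun w : ℝ => w ^ 11) _).mul hquot).congr' ?_ (.of_eq (by simp))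
  filter_upwards [Metric.ball_mem_nhds (0 : ℝ) one_pos] with w hw
  rw [mem_ball_zero_iff, Real.norm_eq_abs, abs_lt] at hw
  have hsub : 1 - w ≠ 0 := by linarith
  have hadd : 1 + w ≠ 0 := by linarith
  unfold digammaHalfSeries
  field_simp
  ring

theorem digammaHalfRemainder_sub_add_one {s : ℝ} (hs : 0 < s) {w : ℝ} (hw : w = (2 * s + 1)⁻¹) :
    digammaHalfRemainder s - digammaHalfRemainder (s + 1)
      = log ((1 + w) / (1 - w)) - 2 * w
        - (digammaHalfSeries (2 * w / (1 - w)) - digammaHalfSeries (2 * w / (1 + w))) := by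
  have hinv : 2 * w / (1 - w) = s⁻¹ := by
    rw [hw]
    field_simp
    ring
  have hinv' : 2 * w / (1 + w) = (s + 1)⁻¹ := by
    rw [hw]
    field_simp
    ring
  have hlog : log ((1 + w) / (1 - w)) = log (s + 1) - log s := by
    rw [← log_div (by positivity) hs.ne', hw]
    congr 1
    field_simp
    ring
  have hstep : digamma (s + 1 + 1 / 2) = digamma (s + 1 / 2) + 2 * w := by
    rw [add_right_comm, digamma_add_one (by positivity), hw]
    field_simp
  rw [hinv, hinv', hlog, digammaHalfRemainder, digammaHalfRemainder, hstep]
  ring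

theorem digammaHalfRemainder_sub_add_one_isBigO :
    (fun s => digammaHalfRemainder s - digammaHalfRemainder (s + 1))
      =O[atTop] fun s => s⁻¹ ^ 11 := by
  have hw : Tendsto (fun s : ℝ => (2 * s + 1)⁻¹) atTop (𝓝 0) :=
    tendsto_inv_atTop_zero.comp
      (tendsto_atTop_add_const_right _ _ (tendsto_id.const_mul_atTop two_pos))
  have hw_le : (fun s : ℝ => (2 * s + 1)⁻¹) =O[atTop] fun s => s⁻¹ := by
    refine IsBigO.of_bound' ?_
    filter_upwards [eventually_gt_atTop 0] with s hs
    rw [Real.norm_of_nonneg (by positivity), Real.norm_of_nonneg (by positivity)]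
    gcongr
    linarith
  have hw_bound := ((log_one_add_div_one_sub_sub_sum_isBigO 5).sub
    digammaHalfSeries_sub_isBigO).comp_tendsto hw
  refine (hw_bound.trans (hw_le.pow 11)).congr' ?_ .rfl
  filter_upwards [eventually_gt_atTop 0] with s hs
  rw [digammaHalfRemainder_sub_add_one hs rfl]
  simp only [Function.comp_apply, Finset.sum_range_succ, Finset.sum_range_zero]
  push_cast
  ring

theorem digammaHalfRemainder_isBigO : digammaHalfRemainder =O[atTop] fun s => s⁻¹ ^ 10 :=
  isBigO_inv_pow_of_sub_add_one 9 tendsto_digammaHalfRemainder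
    digammaHalfRemainder_sub_add_one_isBigO

end Digamma

section LogMean

variable {a : ℝ}

theorem log_sq_add_eventuallyEq (u : ℝ) :
    (fun s : ℝ => log (s ^ 2 + u)) =ᶠ[atTop] fun s => 2 * log s + log (1 + u * s⁻¹ ^ 2) := by
  have hlim : Tendsto (fun s : ℝ => 1 + u * s⁻¹ ^ 2) atTop (𝓝 1) := by
    simpa only [mul_zero, add_zero] using
      ((tendsto_inv_pow_atTop_zero two_ne_zero).const_mul u).const_add 1
  filter_upwards [hlim.eventually_ne one_ne_zero, eventually_ne_atTop 0] with s hu hs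
  rw [show s ^ 2 + u = s ^ 2 * (1 + u * s⁻¹ ^ 2) by field_simp, log_mul (pow_ne_zero 2 hs) hu,
    log_pow, Nat.cast_ofNat]

theorem L_sub_half_eventuallyEq (ha : a ≠ 0) :
    (fun s => L (s - 1 / 2) a) =ᶠ[atTop] fun s => log s
      + (1 / (90 * a ^ 2 + 2) * log (1 + (a + 1 / 12) * s⁻¹ ^ 2)
        + 45 * a ^ 2 / (90 * a ^ 2 + 2) * log (1 + (1 / 12 - 1 / (45 * a)) * s⁻¹ ^ 2)) := by
  filter_upwards [log_sq_add_eventuallyEq (a + 1 / 12),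
    log_sq_add_eventuallyEq (1 / 12 - 1 / (45 * a))] with s hu hv
  have hu' : (s - 1 / 2) ^ 2 + (s - 1 / 2) + (3 * a + 1) / 3 = s ^ 2 + (a + 1 / 12) := by ring
  have hv' : (s - 1 / 2) ^ 2 + (s - 1 / 2) + (15 * a - 1) / (45 * a)
      = s ^ 2 + (1 / 12 - 1 / (45 * a)) := by
    field_simp
    ring
  rw [L, hu', hv', hu, hv]
  field_simp
  ring

/-- The coefficient of `s⁻⁶` in the expansion of `ψ(s + 1/2) - L(s - 1/2, a)`. -/
noncomputable def digammaSubLCoeff₆ (a : ℝ) : ℝ := (16 / 21 - (a - 1 / (45 * a))) / 270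

/-- The coefficient of `s⁻⁸` in the expansion of `ψ(s + 1/2) - L(s - 1/2, a)`. -/
noncomputable def digammaSubLCoeff₈ (a : ℝ) : ℝ :=
  (a - 1 / (45 * a)) ^ 2 / 360 + (a - 1 / (45 * a)) / 1080 - 8 / 2025

-- The weighted power sums `μₖ = (aᵏ + 45a² (-1/(45a))ᵏ) / (90a² + 2)` satisfy `μ₀ = 1/2`, `μ₁ = 0`
-- and `μₖ₊₂ = σ μₖ₊₁ + μₖ / 45` with `σ = a - 1/(45a)`, so the coefficients depend only on `σ`.
theorem L_taylor_eq_digammaHalfSeries_sub (ha : a ≠ 0) {u v : ℝ} (hu : u = a + 1 / 12)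
    (hv : v = 1 / 12 - 1 / (45 * a)) (z : ℝ) :
    1 / (90 * a ^ 2 + 2) * (u * z ^ 2 - u ^ 2 * z ^ 4 / 2 + u ^ 3 * z ^ 6 / 3 - u ^ 4 * z ^ 8 / 4)
      + 45 * a ^ 2 / (90 * a ^ 2 + 2)
        * (v * z ^ 2 - v ^ 2 * z ^ 4 / 2 + v ^ 3 * z ^ 6 / 3 - v ^ 4 * z ^ 8 / 4)
      = digammaHalfSeries z - digammaSubLCoeff₆ a * z ^ 6 - digammaSubLCoeff₈ a * z ^ 8 := by
  rw [hu, hv, digammaHalfSeries, digammaSubLCoeff₆, digammaSubLCoeff₈]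
  field_simp
  ring

theorem L_sub_half_isBigO (ha : a ≠ 0) :
    (fun s => L (s - 1 / 2) a - log s - (digammaHalfSeries s⁻¹
        - digammaSubLCoeff₆ a * s⁻¹ ^ 6 - digammaSubLCoeff₈ a * s⁻¹ ^ 8))
      =O[atTop] fun s => s⁻¹ ^ 10 := by
  have hlogs := ((log_one_add_mul_inv_sq_sub_isBigO (a + 1 / 12)).const_mul_left
    (1 / (90 * a ^ 2 + 2))).add ((log_one_add_mul_inv_sq_sub_isBigO
      (1 / 12 - 1 / (45 * a))).const_mul_left (45 * a ^ 2 / (90 * a ^ 2 + 2)))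
  refine hlogs.congr' ?_ .rfl
  filter_upwards [L_sub_half_eventuallyEq ha] with s hs
  rw [hs, ← L_taylor_eq_digammaHalfSeries_sub ha rfl rfl]
  ring

theorem digamma_sub_L_isBigO (ha : a ≠ 0) :
    (fun s => digamma (s + 1 / 2) - L (s - 1 / 2) a
        - (digammaSubLCoeff₆ a * s⁻¹ ^ 6 + digammaSubLCoeff₈ a * s⁻¹ ^ 8))
      =O[atTop] fun s => s⁻¹ ^ 10 := by
  refine (digammaHalfRemainder_isBigO.sub (L_sub_half_isBigO ha)).congr_left fun s => ?_
  rw [digammaHalfRemainder]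
  ring

theorem tendsto_pow_eight_mul_digamma_sub_L (hroot : a - 1 / (45 * a) = 16 / 21) :
    Tendsto (fun x => x ^ 8 * (digamma (x + 1) - L x a)) atTop (𝓝 (-2 / 1225)) := by
  have ha : a ≠ 0 := by
    rintro rfl
    norm_num at hroot
  have h₆ : digammaSubLCoeff₆ a = 0 := by rw [digammaSubLCoeff₆, hroot, sub_self, zero_div]
  have h₈ : digammaSubLCoeff₈ a = -2 / 1225 := by rw [digammaSubLCoeff₈, hroot]; norm_num
  have hexp := digamma_sub_L_isBigO ha
  simp only [h₆, h₈, zero_mul, zero_add] at hexp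
  have hlim := tendsto_pow_mul_comp_add_const (1 / 2)
    (tendsto_pow_mul_of_isBigO_sub (by norm_num) hexp)
  simpa only [add_assoc, add_halves, add_sub_cancel_right] using hlim

end LogMean

/-- With a₁ = (40 + 3√205)/105, lim_{x→∞} x⁸·(ψ(x+1) − L(x,a₁)) = −2/1225. -/
theorem stmt_18 :
    Filter.Tendsto
      (fun x : ℝ => x ^ 8 * (digamma (x + 1) - L x ((40 + 3 * Real.sqrt 205) / 105)))
      Filter.atTop (nhds (-2 / 1225)) := by
  have hsqrt : √205 ^ 2 = 205 := sq_sqrt (by norm_num)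
  refine tendsto_pow_eight_mul_digamma_sub_L ?_
  field_simp
  linear_combination 8505 * hsqrt
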